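/- arXiv:1502.04328 — 2 statements merged into one kernel-verified Lean document; each statement's English description precedes it below -/
import Mathlib

section
/- Let X and Y be finite nonempty sets of points in the plane whose convex hulls are disjoint. Then there exist x ∈ X and y ∈ Y that see each other: the segment [x, y] intersects the convex hull of X only at x and intersects the convex hull of Y only at y. -/
open scoped Classical

noncomputable section

abbrev Pt : Type := ℝ × ℝ

/-- Signed value of `z` with respect to the line `a x + b y + c = 0`. -/
def sideVal (a b c : ℝ) (z : Pt) : ℝ := a * z.1 + b * z.2 + c

/-- The segment `[u,v]` crosses the line: endpoints strictly on opposite sides. -/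
def crossesLine (a b c : ℝ) (u v : Pt) : Prop := sideVal a b c u * sideVal a b c v < 0

/-- Planar determinant of two vectors. -/
def det2 (u v : Pt) : ℝ := u.1 * v.2 - u.2 * v.1

/-- `w` lies in the closed convex cone spanned by `u` and `v`. -/
def memCone (u v w : Pt) : Prop := ∃ s t : ℝ, 0 ≤ s ∧ 0 ≤ t ∧ w = s • u + t • v

/-- No three points of `X` are collinear. -/
def GenPos (X : Finset Pt) : Prop :=
  ∀ x ∈ X, ∀ y ∈ X, ∀ z ∈ X, x ≠ y → x ≠ z → y ≠ z → ¬ Collinear ℝ ({x, y, z} : Set Pt)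

/-- Edges of a straight-line path visiting the points of `l` in order. -/
def pathEdges (l : List Pt) : List (Pt × Pt) := l.zip l.tail

def segOf (e : Pt × Pt) : Set Pt := segment ℝ e.1 e.2

/-- Non-adjacent edges are disjoint; adjacent edges meet only at the shared vertex. -/
def NonSelfIntersecting (l : List Pt) : Prop :=
  (∀ i j, ∀ hi : i < (pathEdges l).length, ∀ hj : j < (pathEdges l).length, i + 1 < j →
    segOf ((pathEdges l).get ⟨i, hi⟩) ∩ segOf ((pathEdges l).get ⟨j, hj⟩) = ∅) ∧
  (∀ i, ∀ hi : i < (pathEdges l).length, ∀ hj : i + 1 < (pathEdges l).length,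
    segOf ((pathEdges l).get ⟨i, hi⟩) ∩ segOf ((pathEdges l).get ⟨i + 1, hj⟩)
      = {((pathEdges l).get ⟨i + 1, hj⟩).1})

/-- Number of edges of the path crossing the line `a x + b y + c = 0`. -/
def crossCount (a b c : ℝ) (l : List Pt) : ℕ :=
  ((pathEdges l).filter (fun e => decide (crossesLine a b c e.1 e.2))).length

/-- The `i`-th edge of the cycle on the points of `l` (indices mod `l.length`). -/
def cEdge (l : List Pt) (i : ℕ) (hi : i < l.length) : Set Pt :=
  segment ℝ (l.get ⟨i, hi⟩)
    (l.get ⟨(i + 1) % l.length, Nat.mod_lt _ (Nat.lt_of_le_of_lt (Nat.zero_le i) hi)⟩)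

/-- Simple polygon condition for the cycle through `l`. -/
def CycleNSI (l : List Pt) : Prop :=
  ∀ i j, ∀ hi : i < l.length, ∀ hj : j < l.length, i ≠ j →
    ((i + 1) % l.length = j → cEdge l i hi ∩ cEdge l j hj = {l.get ⟨j, hj⟩}) ∧
    ((j + 1) % l.length = i → cEdge l i hi ∩ cEdge l j hj = {l.get ⟨i, hi⟩}) ∧
    ((i + 1) % l.length ≠ j → (j + 1) % l.length ≠ i → cEdge l i hi ∩ cEdge l j hj = ∅)

/-- Number of edges of the cycle on `l` crossing the line. -/
def cycleCrossCount (a b c : ℝ) (l : List Pt) : ℕ :=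
  (Finset.univ.filter (fun i : Fin l.length =>
    crossesLine a b c (l.get i)
      (l.get ⟨(i.1 + 1) % l.length,
        Nat.mod_lt _ (Nat.lt_of_le_of_lt (Nat.zero_le i.1) i.2)⟩))).card

/-- If a linear functional is at most `f x` on `A` and `f x < f y`, then the segment from `x` to `y`
meets `A` only at `x`. -/
theorem segment_inter_eq_singleton_of_forall_le {E : Type*} [AddCommGroup E] [Module ℝ E]
    (f : E →ₗ[ℝ] ℝ) {A : Set E} {x y : E} (hx : x ∈ A) (hle : ∀ z ∈ A, f z ≤ f x)
    (hxy : f x < f y) : segment ℝ x y ∩ A = {x} := by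
  refine Set.Subset.antisymm ?_
    (Set.singleton_subset_iff.2 ⟨left_mem_segment ℝ x y, hx⟩)
  rintro z ⟨⟨a, b, ha, hb, hab, rfl⟩, hz⟩
  have h := hle _ hz
  simp only [map_add, map_smul, smul_eq_mul] at h
  obtain rfl : a = 1 - b := by linarith
  have hb0 : b = 0 := by nlinarith
  simp [hb0]

/-- A bound of a linear functional on a set extends to the convex hull. -/
theorem forall_mem_convexHull_le {E : Type*} [AddCommGroup E] [Module ℝ E]
    (f : E →ₗ[ℝ] ℝ) {A : Set E} {r : ℝ} (h : ∀ z ∈ A, f z ≤ r) :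
    ∀ z ∈ convexHull ℝ A, f z ≤ r :=
  convexHull_min (t := {z | f z ≤ r}) h (convex_halfSpace_le f.isLinear r)

/-- Two finite sets with disjoint convex hulls contain points seeing each other. -/
theorem stmt6 (X Y : Finset Pt) (hX : X.Nonempty) (hY : Y.Nonempty)
    (hdisj : convexHull ℝ ((X : Finset Pt) : Set Pt) ∩ convexHull ℝ ((Y : Finset Pt) : Set Pt) = ∅) :
    ∃ x ∈ X, ∃ y ∈ Y,
      segment ℝ x y ∩ convexHull ℝ ((X : Finset Pt) : Set Pt) = {x} ∧
      segment ℝ x y ∩ convexHull ℝ ((Y : Finset Pt) : Set Pt) = {y} := by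
  obtain ⟨f, u, v, hfX, huv, hfY⟩ := geometric_hahn_banach_compact_closed
    (convex_convexHull ℝ (X : Set Pt)) (X.finite_toSet.isCompact_convexHull ℝ)
    (convex_convexHull ℝ (Y : Set Pt)) (Y.finite_toSet.isClosed_convexHull ℝ)
    (Set.disjoint_iff_inter_eq_empty.2 hdisj)
  obtain ⟨x, hx, hxmax⟩ := X.exists_max_image f hX
  obtain ⟨y, hy, hymin⟩ := Y.exists_min_image f hY
  have hx' : x ∈ convexHull ℝ (X : Set Pt) := subset_convexHull ℝ _ hx
  have hy' : y ∈ convexHull ℝ (Y : Set Pt) := subset_convexHull ℝ _ hy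
  have hxy : f x < f y := (hfX x hx').trans (huv.trans (hfY y hy'))
  refine ⟨x, hx, y, hy, ?_, ?_⟩
  · exact segment_inter_eq_singleton_of_forall_le f.toLinearMap hx'
      (forall_mem_convexHull_le f.toLinearMap hxmax) hxy
  · rw [segment_symm]
    exact segment_inter_eq_singleton_of_forall_le (-f.toLinearMap) hy'
      (forall_mem_convexHull_le (-f.toLinearMap) fun z hz => neg_le_neg (hymin z hz))
      (neg_lt_neg hxy)
end
end

section
/- Let X be a finite set of points in general position, x ∈ X a vertex of the convex hull of X, and ℓ a line with points of X strictly on both sides. Suppose x' ∈ X \ {x} is a point seen by x with respect to X \ {x}, chosen on the same side of ℓ as x whenever such a visible point on that side exists. If x' lies strictly on the opposite side of ℓ from x, then every point of X \ {x} lies on the opposite side of ℓ from x or on ℓ — in fact, since general position forbids points on ℓ through two points of X in degenerate ways, assume no point of X lies on ℓ; then all of X \ {x} lies strictly on the opposite side of ℓ from x. -/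
open scoped Classical

noncomputable section

/-- If the segment from `x` to `y ∈ C` meets `C` in more than `y`, it contains a point of `C` at some
parameter `r < 1`. -/
theorem exists_lineMap_mem_of_segment_inter_ne {E : Type*} [AddCommGroup E] [Module ℝ E]
    {C : Set E} {x y : E} (hy : y ∈ C) (h : segment ℝ x y ∩ C ≠ {y}) :
    ∃ r : ℝ, 0 ≤ r ∧ r < 1 ∧ AffineMap.lineMap x y r ∈ C := by
  by_contra! hne
  refine h (Set.eq_singleton_iff_unique_mem.2 ⟨⟨right_mem_segment ℝ x y, hy⟩, ?_⟩)
  rintro q ⟨hq, hqC⟩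
  rw [segment_eq_image_lineMap] at hq
  obtain ⟨r, ⟨hr0, hr1⟩, rfl⟩ := hq
  rcases hr1.lt_or_eq with hr | rfl
  · exact absurd hqC (hne r hr0 hr)
  · simp

/-- If `x` lies outside the convex hull of `Y` and some point of `Y` lies in the same open half-space
`0 < L + c` as `x`, then `x` sees a point of `Y` in that half-space. -/
theorem exists_visible_mem_halfSpace {E : Type*} [NormedAddCommGroup E] [NormedSpace ℝ E]
    (Y : Finset E) (L : E →ₗ[ℝ] ℝ) (c : ℝ) {x z : E} (hx : x ∉ convexHull ℝ (Y : Set E))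
    (hz : z ∈ Y) (hLx : 0 < L x + c) (hLz : 0 < L z + c) :
    ∃ y ∈ Y, 0 < L y + c ∧ segment ℝ x y ∩ convexHull ℝ (Y : Set E) = {y} := by
  have hcl : IsClosed (convexHull ℝ (Y : Set E)) := Y.finite_toSet.isClosed_convexHull ℝ
  have hcpt : IsCompact (Set.Icc (0 : ℝ) 1 ∩
      (fun r : ℝ => AffineMap.lineMap x z r) ⁻¹' convexHull ℝ (Y : Set E)) :=
    isCompact_Icc.inter_right (hcl.preimage AffineMap.lineMap_continuous)
  obtain ⟨r₀, ⟨⟨hr₀, hr₁⟩, hmem⟩, hmin⟩ := hcpt.exists_isLeast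
    ⟨1, ⟨zero_le_one, le_rfl⟩, by simpa using subset_convexHull ℝ _ hz⟩
  rw [Set.mem_preimage] at hmem
  have hpos : 0 < r₀ := by
    rcases hr₀.lt_or_eq with h | rfl
    · exact h
    · simp [hx] at hmem
  obtain ⟨w, hw0, hw1, hws⟩ := Finset.mem_convexHull'.1 hmem
  have hsum : 0 < ∑ y ∈ Y, w y * (L y + c) := by
    have hL := congrArg L hws
    simp only [map_sum, map_smul, smul_eq_mul, AffineMap.lineMap_apply_module, map_add] at hL
    simp only [mul_add, Finset.sum_add_distrib, ← Finset.sum_mul, hw1, hL]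
    nlinarith [mul_nonneg (sub_nonneg.2 hr₁) hLx.le, mul_pos hpos hLz]
  obtain ⟨y, hy, hwy⟩ := Finset.exists_lt_of_sum_lt (s := Y) (f := fun _ => (0 : ℝ))
    (by simpa using hsum)
  have hyw : 0 < w y := (hw0 y hy).lt_of_ne fun h => by simp [← h] at hwy
  refine ⟨y, hy, pos_of_mul_pos_right hwy (hw0 y hy), ?_⟩
  by_contra hvis
  obtain ⟨r, hr, hr1, hq⟩ :=
    exists_lineMap_mem_of_segment_inter_ne (subset_convexHull ℝ _ hy) hvis
  have hrpos : 0 < r := by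
    rcases hr.lt_or_eq with h | rfl
    · exact h
    · simp [hx] at hq
  -- Replacing `y` by the nearer point `q` gives total weight `D > 1`.
  set q := AffineMap.lineMap x y r with hqdef
  set D := w y / r + ∑ j ∈ Y.erase y, w j with hD
  have hwe := Finset.add_sum_erase Y w hy
  have hD1 : 1 < D := by
    have : w y < w y / r := by rw [lt_div_iff₀ hrpos]; nlinarith
    linarith
  have hDpos : 0 < D := by linarith
  have hnew : (w y / r / D) • q + ∑ j ∈ Y.erase y, (w j / D) • j ∈ convexHull ℝ (Y : Set E) := by
    have h := (convex_convexHull ℝ (Y : Set E)).sum_mem (t := Y)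
      (w := fun j => if j = y then w y / r / D else w j / D) (z := fun j => if j = y then q else j)
      ?_ ?_ ?_
    · rw [← Finset.add_sum_erase Y _ hy] at h
      simp only [if_true] at h
      convert h using 2
      exact Finset.sum_congr rfl fun j hj => by simp [Finset.ne_of_mem_erase hj]
    · intro j hj
      have := hw0 j hj
      split_ifs <;> positivity
    · rw [← Finset.add_sum_erase Y _ hy, Finset.sum_congr rfl (g := fun j => w j / D)
        fun j hj => by simp [Finset.ne_of_mem_erase hj], ← Finset.sum_div]
      simp only [if_true]
      rw [← add_div, ← hD, div_self hDpos.ne']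
    · intro j hj
      split_ifs
      · exact hq
      · exact subset_convexHull ℝ _ hj
  have heq : (w y / r / D) • q + ∑ j ∈ Y.erase y, (w j / D) • j
      = AffineMap.lineMap x z (r₀ / D) := by
    have hs : ∑ j ∈ Y.erase y, (w j / D) • j = D⁻¹ • (AffineMap.lineMap x z r₀ - w y • y) := by
      rw [← hws, ← Finset.add_sum_erase Y _ hy, add_sub_cancel_left, Finset.smul_sum]
      exact Finset.sum_congr rfl fun j _ => by rw [smul_smul, div_eq_inv_mul]
    have hDe : D = w y / r + 1 - w y := by linarith
    rw [hs, hqdef]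
    simp only [AffineMap.lineMap_apply_module]
    match_scalars
    · field_simp
      rw [hDe]
      field_simp
      ring
    · field_simp
      ring
    · field_simp
  rw [heq] at hnew
  have hlt : r₀ / D < r₀ := div_lt_self hpos hD1
  exact absurd (hmin ⟨⟨by positivity, by linarith⟩, hnew⟩) (not_le.2 hlt)

/-- If the visible point `x'` chosen preferentially on `x`'s side of `ℓ` is on the
opposite side, then all of `X \ {x}` is strictly on the opposite side. -/
theorem stmt7 (X : Finset Pt) (hgp : GenPos X) (a b c : ℝ) (hab : (a, b) ≠ ((0:ℝ), (0:ℝ)))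
    (hnone : ∀ z ∈ X, sideVal a b c z ≠ 0)
    (x : Pt) (hx : x ∈ X) (hvert : x ∉ convexHull ℝ ((X.erase x : Finset Pt) : Set Pt))
    (hboth : (∃ z ∈ X, 0 < sideVal a b c z) ∧ (∃ z ∈ X, sideVal a b c z < 0))
    (x' : Pt) (hx' : x' ∈ X.erase x)
    (hsees : segment ℝ x x' ∩ convexHull ℝ ((X.erase x : Finset Pt) : Set Pt) = {x'})
    (hchoice : (∃ y ∈ X.erase x, 0 < sideVal a b c y * sideVal a b c x ∧
        segment ℝ x y ∩ convexHull ℝ ((X.erase x : Finset Pt) : Set Pt) = {y}) →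
      0 < sideVal a b c x' * sideVal a b c x)
    (hopp : sideVal a b c x' * sideVal a b c x < 0) :
    ∀ y ∈ X.erase x, sideVal a b c y * sideVal a b c x < 0 := by
  intro y hy
  have hne := mul_ne_zero (hnone y (Finset.mem_of_mem_erase hy)) (hnone x hx)
  by_contra hcon
  have hpos := (not_lt.1 hcon).lt_of_ne' hne
  set σ := sideVal a b c x with hσ
  have key : ∀ p : Pt, (σ • (a • LinearMap.fst ℝ ℝ ℝ + b • LinearMap.snd ℝ ℝ ℝ)) p + σ * c
      = sideVal a b c p * σ := fun p => by
    simp [sideVal]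
    ring
  obtain ⟨v, hv, hv0, hvis⟩ := exists_visible_mem_halfSpace (X.erase x) _ (σ * c) hvert hy
    (by rw [key]; exact mul_self_pos.2 (hnone x hx)) (by rw [key]; exact hpos)
  rw [key] at hv0
  exact lt_asymm hopp (hchoice ⟨v, hv, hv0, hvis⟩)
end
end
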